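/- Let G = (V,E) be a Δ-regular graph of girth at least 6, let 0 < λ < e/Δ, and let X be a random independent set drawn from the Gibbs distribution of the hard-core model on G at fugacity λ. Then for every vertex v and every ψ > 0, Pr(|X ∩ N(v)| > e + ψΔ/2) ≤ exp(−ψ²Δ/8), where N(v) is the neighborhood of v and e is Euler's number. -/

import Mathlib

open Finset in
/-- One vertex at a time: tilting by one more vertex costs at most a Bernoulli factor. -/
lemma tilt_step {V : Type*} [Fintype V] [DecidableEq V]
    (G : SimpleGraph V) [DecidableRel G.Adj] (lam a : ℝ) (hl : 0 < lam) (ha : 1 ≤ a)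
    (S : Finset V) (u : V) (hu : u ∉ S) :
    ∑ X ∈ univ.filter (fun X : Finset V => ∀ x ∈ X, ∀ y ∈ X, ¬ G.Adj x y),
        lam ^ X.card * a ^ (X ∩ insert u S).card
      ≤ (1 - lam / (1 + lam) + lam / (1 + lam) * a) *
        ∑ X ∈ univ.filter (fun X : Finset V => ∀ x ∈ X, ∀ y ∈ X, ¬ G.Adj x y),
          lam ^ X.card * a ^ (X ∩ S).card := by
  set I := univ.filter (fun X : Finset V => ∀ x ∈ X, ∀ y ∈ X, ¬ G.Adj x y) with hI
  rw [← sum_filter_add_sum_filter_not I (fun X => u ∈ X),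
    ← sum_filter_add_sum_filter_not I (fun X => u ∈ X) (fun X => lam ^ X.card * a ^ (X ∩ S).card)]
  have h1 : ∑ X ∈ I.filter (fun X => u ∈ X), lam ^ X.card * a ^ (X ∩ insert u S).card
      = a * ∑ X ∈ I.filter (fun X => u ∈ X), lam ^ X.card * a ^ (X ∩ S).card := by
    rw [mul_sum]
    refine sum_congr rfl fun X hX => ?_
    have hX2 := (mem_filter.1 hX).2
    rw [inter_insert_of_mem hX2, card_insert_of_notMem (by simp [hu]), pow_succ]
    ring
  have h2 : ∑ X ∈ I.filter (fun X => u ∉ X), lam ^ X.card * a ^ (X ∩ insert u S).card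
      = ∑ X ∈ I.filter (fun X => u ∉ X), lam ^ X.card * a ^ (X ∩ S).card := by
    refine sum_congr rfl fun X hX => ?_
    have hX2 := (mem_filter.1 hX).2
    rw [inter_insert_of_notMem hX2]
  rw [h1, h2]
  set B := ∑ X ∈ I.filter (fun X => u ∈ X), lam ^ X.card * a ^ (X ∩ S).card with hB
  set A := ∑ X ∈ I.filter (fun X => u ∉ X), lam ^ X.card * a ^ (X ∩ S).card with hA
  have h3 : B ≤ lam * A := by
    have hinj : Set.InjOn (fun X : Finset V => X.erase u)
        (I.filter (fun X => u ∈ X) : Finset (Finset V)) := by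
      intro X hX Y hY h
      have hX2 := (mem_filter.1 (mem_coe.1 hX)).2
      have hY2 := (mem_filter.1 (mem_coe.1 hY)).2
      have h' : X.erase u = Y.erase u := h
      rw [← insert_erase hX2, h', insert_erase hY2]
    have e1 : B = lam * ∑ X ∈ (I.filter (fun X => u ∈ X)).image (fun X => X.erase u),
        lam ^ X.card * a ^ (X ∩ S).card := by
      rw [sum_image hinj, mul_sum]
      refine sum_congr rfl fun X hX => ?_
      have hX2 := (mem_filter.1 hX).2
      rw [erase_inter, erase_eq_of_notMem (s := X ∩ S) (by simp [hu]),
        ← card_erase_add_one hX2, pow_succ]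
      ring
    rw [e1]
    refine mul_le_mul_of_nonneg_left ?_ hl.le
    refine sum_le_sum_of_subset_of_nonneg ?_ (fun X _ _ => by positivity)
    intro Y hY
    obtain ⟨X, hX, rfl⟩ := mem_image.1 hY
    simp only [hI, mem_filter, mem_univ, true_and] at hX ⊢
    exact ⟨fun x hx y hy => hX.1 x (mem_of_mem_erase hx) y (mem_of_mem_erase hy),
      notMem_erase u X⟩
  have hp : (0 : ℝ) < 1 + lam := by linarith
  have e : (1 - lam / (1 + lam) + lam / (1 + lam) * a) * (B + A) - (a * B + A)
      = (a - 1) * (lam * A - B) / (1 + lam) := by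
    field_simp
    ring
  have : 0 ≤ (a - 1) * (lam * A - B) / (1 + lam) :=
    div_nonneg (mul_nonneg (by linarith) (by linarith)) hp.le
  linarith

open Finset in
lemma tilt_all {V : Type*} [Fintype V] [DecidableEq V]
    (G : SimpleGraph V) [DecidableRel G.Adj] (lam a : ℝ) (hl : 0 < lam) (ha : 1 ≤ a)
    (S : Finset V) :
    ∑ X ∈ univ.filter (fun X : Finset V => ∀ x ∈ X, ∀ y ∈ X, ¬ G.Adj x y),
        lam ^ X.card * a ^ (X ∩ S).card
      ≤ (1 - lam / (1 + lam) + lam / (1 + lam) * a) ^ S.card *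
        ∑ X ∈ univ.filter (fun X : Finset V => ∀ x ∈ X, ∀ y ∈ X, ¬ G.Adj x y),
          lam ^ X.card := by
  induction S using Finset.induction_on with
  | empty => simp
  | insert u S hu ih =>
    refine (tilt_step G lam a hl ha S u hu).trans ?_
    rw [card_insert_of_notMem hu, pow_succ', mul_assoc]
    refine mul_le_mul_of_nonneg_left ih ?_
    have : lam / (1 + lam) ≤ 1 := by
      rw [div_le_one (by linarith)]
      linarith
    have h0 : 0 ≤ lam / (1 + lam) * a := by positivity
    linarith

/-- A weak form of Hoeffding's lemma for a Bernoulli variable. -/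
lemma bernoulli_mgf (p t : ℝ) (hp0 : 0 ≤ p) (hp1 : p ≤ 1) :
    1 - p + p * Real.exp t ≤ Real.exp (p * t + t ^ 2 / 2) := by
  have hJ : Real.exp (-(p * t)) ≤ 1 - p + p * Real.exp (-t) := by
    have := convexOn_exp.2 (Set.mem_univ (0 : ℝ)) (Set.mem_univ (-t))
      (by linarith : 0 ≤ 1 - p) hp0 (by ring)
    simpa using this
  have hc : Real.cosh t ≤ Real.exp (t ^ 2 / 2) := Real.cosh_le_exp_half_sq t
  have hc1 := Real.one_le_cosh t
  have hce := Real.cosh_eq t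
  have hm : Real.exp t * Real.exp (-t) = 1 := by rw [← Real.exp_add]; simp
  have hpos : 0 ≤ 1 - p + p * Real.exp t := by
    have := mul_nonneg hp0 (Real.exp_pos t).le
    linarith
  have hprod : (1 - p + p * Real.exp t) * (1 - p + p * Real.exp (-t)) ≤ Real.cosh t := by
    have e : (1 - p + p * Real.exp t) * (1 - p + p * Real.exp (-t))
        = 1 + 2 * p * (1 - p) * (Real.cosh t - 1) := by
      rw [hce]
      linear_combination p ^ 2 * hm
    rw [e]
    have : 0 ≤ (1 - 2 * p * (1 - p)) * (Real.cosh t - 1) :=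
      mul_nonneg (by nlinarith [sq_nonneg p, sq_nonneg (1 - p)]) (by linarith)
    linarith
  have h := (mul_le_mul_of_nonneg_left hJ hpos).trans (hprod.trans hc)
  calc 1 - p + p * Real.exp t
      = ((1 - p + p * Real.exp t) * Real.exp (-(p * t))) * Real.exp (p * t) := by
        rw [mul_assoc, ← Real.exp_add]; simp
    _ ≤ Real.exp (t ^ 2 / 2) * Real.exp (p * t) :=
        mul_le_mul_of_nonneg_right h (Real.exp_pos _).le
    _ = _ := by rw [← Real.exp_add, add_comm]

/-- **Few occupied neighbors** (from the proof of Lemma 4.2). For a `Δ`-regular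
graph of girth at least 6 and `0 < λ < e/Δ`, a random independent set `X` from the
Gibbs distribution at fugacity `λ` satisfies, for every vertex `v` and every `ψ > 0`,
`Pr(|X ∩ N(v)| > e + ψΔ/2) ≤ exp(-ψ²Δ/8)`. -/
theorem stmt_17 {V : Type*} [Fintype V] [DecidableEq V]
    (G : SimpleGraph V) [DecidableRel G.Adj]
    (Δ : ℕ)
    (hreg : G.IsRegularOfDegree Δ)
    (hgirth : 6 ≤ G.egirth)
    (lam : ℝ) (hlam0 : 0 < lam) (hlamu : lam < Real.exp 1 / (Δ : ℝ))
    -- the partition function at fugacity lam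
    (Z : ℝ)
    (hZ : Z = ∑ X ∈ Finset.univ.filter
      (fun X : Finset V => ∀ u ∈ X, ∀ v ∈ X, ¬ G.Adj u v), lam ^ X.card)
    (v : V) (ψ : ℝ) (hψ : 0 < ψ) :
    -- probability, under the Gibbs distribution, that v has many occupied neighbors
    (∑ X ∈ Finset.univ.filter (fun X : Finset V =>
        (∀ u ∈ X, ∀ w ∈ X, ¬ G.Adj u w) ∧
        Real.exp 1 + ψ * (Δ : ℝ) / 2 < ((X ∩ G.neighborFinset v).card : ℝ)),
      lam ^ X.card) / Z
      ≤ Real.exp (-ψ ^ 2 * (Δ : ℝ) / 8) := by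
  have hΔ : (0 : ℝ) < Δ := by
    rcases Nat.eq_zero_or_pos Δ with h | h
    · subst h
      simp at hlamu
      linarith
    · exact_mod_cast h
  have hlΔ : lam * Δ < Real.exp 1 := (lt_div_iff₀ hΔ).1 hlamu
  have hZpos : 0 < Z := by
    rw [hZ]
    exact Finset.sum_pos (fun X _ => by positivity) ⟨∅, by simp⟩
  have hall := tilt_all G lam (Real.exp (ψ / 2)) hlam0 (Real.one_le_exp (by linarith))
    (G.neighborFinset v)
  rw [← hZ, G.card_neighborFinset_eq_degree, hreg.degree_eq] at hall
  set p := lam / (1 + lam) with hp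
  have hp0 : 0 ≤ p := by positivity
  have hp1 : p ≤ 1 := by
    rw [hp, div_le_one (by linarith)]
    linarith
  have hpl : p ≤ lam := div_le_self hlam0.le (by linarith)
  have hb := bernoulli_mgf p (ψ / 2) hp0 hp1
  have hb0 : 0 ≤ 1 - p + p * Real.exp (ψ / 2) := by
    have := mul_nonneg hp0 (Real.exp_pos (ψ / 2)).le
    linarith
  have hbΔ := pow_le_pow_left₀ hb0 hb Δ
  rw [← Real.exp_nat_mul] at hbΔ
  set c := Real.exp 1 + ψ * (Δ : ℝ) / 2 with hc
  rw [div_le_iff₀ hZpos]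
  -- Markov's inequality
  have hM : (∑ X ∈ Finset.univ.filter (fun X : Finset V =>
        (∀ u ∈ X, ∀ w ∈ X, ¬ G.Adj u w) ∧ c < ((X ∩ G.neighborFinset v).card : ℝ)),
      lam ^ X.card) ≤ Real.exp (-(ψ / 2 * c)) *
      ∑ X ∈ Finset.univ.filter (fun X : Finset V => ∀ x ∈ X, ∀ y ∈ X, ¬ G.Adj x y),
        lam ^ X.card * Real.exp (ψ / 2) ^ (X ∩ G.neighborFinset v).card := by
    rw [Finset.mul_sum, ← Finset.filter_filter]
    refine (Finset.sum_le_sum fun X hX => ?_).trans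
      (Finset.sum_le_sum_of_subset_of_nonneg (Finset.filter_subset _ _)
        (fun X _ _ => by positivity))
    have hX2 := (Finset.mem_filter.1 hX).2
    rw [mul_left_comm, ← Real.exp_nat_mul, ← Real.exp_add]
    refine le_mul_of_one_le_right (by positivity) (Real.one_le_exp ?_)
    nlinarith
  refine hM.trans ?_
  calc _ ≤ Real.exp (-(ψ / 2 * c)) *
        (Real.exp (Δ * (p * (ψ / 2) + (ψ / 2) ^ 2 / 2)) * Z) :=
        mul_le_mul_of_nonneg_left
          (hall.trans (mul_le_mul_of_nonneg_right hbΔ hZpos.le)) (Real.exp_pos _).le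
    _ = Real.exp (-(ψ / 2 * c) + Δ * (p * (ψ / 2) + (ψ / 2) ^ 2 / 2)) * Z := by
        rw [← mul_assoc, ← Real.exp_add]
    _ ≤ _ := by
        refine mul_le_mul_of_nonneg_right (Real.exp_le_exp.2 ?_) hZpos.le
        have h1 : p * Δ ≤ Real.exp 1 := (mul_le_mul_of_nonneg_right hpl hΔ.le).trans hlΔ.le
        have h2 := mul_le_mul_of_nonneg_left h1 (by linarith : 0 ≤ ψ / 2)
        rw [hc]
        linarith
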